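/- arXiv:1810.09382 — 2 statements merged into one kernel-verified Lean document; each statement's English description precedes it below -/
import Mathlib

section
/- Let k be a field, let A be a smooth commutative k-algebra, let J ⊆ A be an ideal, and set Ā = A/J. Let I = ker(μ_A : A ⊗_k A → A) and Ī = ker(μ_Ā : Ā ⊗_k Ā → Ā). Then there is a short exact sequence of (Ā ⊗_k Ā)-modules 0 → J/J² → I ⊗_{A ⊗ A} (Ā ⊗ Ā) → Ī → 0, where the first map sends the class of j ∈ J to the class of j ⊗ 1 − 1 ⊗ j, and the second map is induced by the projection A ⊗_k A → Ā ⊗_k Ā. -/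
set_option synthInstance.maxHeartbeats 1000000
set_option maxHeartbeats 1000000

open TensorProduct

universe u

variable (k : Type u) [Field k]
variable (A : Type u) [CommRing A] [Algebra k A]
variable [Algebra.FormallySmooth k A] [Algebra.FiniteType k A]
variable (J : Ideal A)

/-!
Let `K` be the ideal of `Spec Ā × Spec Ā` in `Spec A × Spec A`, so that the middle term of the
sequence is `I / K I` and the last map is reduction modulo `K`. Its kernel `(K ∩ I) / K I` consists
of the classes of `j ⊗ 1 - 1 ⊗ j`: if `ι` is one of the two inclusions `A → A ⊗ A`, then
`y ≡ ι (μ y)` modulo `K I` for `y` in the extension of `J` along `ι`. Injectivity comes from a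
linear map `p : A → J / J²` which restricts to the quotient map on `J`: the map `a ⊗ b ↦ a • p b`
kills `K I` and sends `j ⊗ 1 - 1 ⊗ j` to minus the class of `j`.
-/

open Algebra.TensorProduct (includeLeft includeRight lmul' lmul'_apply_tmul)

theorem sub_map_mem_map_mul_ker_of_leftInverse {S T F G : Type*} [CommRing S] [CommRing T]
    [FunLike F T S] [RingHomClass F T S] [FunLike G S T] [RingHomClass G S T]
    {μ : F} {ι : G} (hι : Function.LeftInverse μ ι) {𝔞 : Ideal S} {y : T} (hy : y ∈ 𝔞.map ι) :
    y - ι (μ y) ∈ 𝔞.map ι * RingHom.ker μ := by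
  induction hy using Submodule.span_induction with
  | mem y hy =>
    obtain ⟨j, -, rfl⟩ := hy
    simp [hι j]
  | zero => simp
  | add y z _ _ hy hz =>
    rw [map_add, map_add, add_sub_add_comm]
    exact add_mem hy hz
  | smul b y hy ih =>
    have hb : b - ι (μ b) ∈ RingHom.ker μ := by rw [RingHom.mem_ker, map_sub, hι, sub_self]
    have key : b • y - ι (μ (b • y)) = ι (μ b) * (y - ι (μ y)) + y * (b - ι (μ b)) := by
      rw [smul_eq_mul, map_mul, map_mul]
      ring
    rw [key]
    exact add_mem (Ideal.mul_mem_left _ _ ih) (Ideal.mul_mem_mul hy hb)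

theorem exists_tmul_one_eq {B C M : Type*} [CommSemiring B] [Semiring C] [Algebra B C]
    [AddCommMonoid M] [Module B M] (hC : Function.Surjective (algebraMap B C)) (s : M ⊗[B] C) :
    ∃ m : M, m ⊗ₜ 1 = s := by
  obtain ⟨m, hm⟩ := TensorProduct.mk_surjective B M C hC (TensorProduct.comm B M C s)
  exact ⟨m, (TensorProduct.comm B M C).injective hm⟩

theorem tmul_one_eq_zero_iff_mem_ker_smul_top {B C M : Type*} [CommRing B] [CommRing C]
    [Algebra B C] [AddCommGroup M] [Module B M] (hC : Function.Surjective (algebraMap B C))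
    {m : M} :
    m ⊗ₜ[B] (1 : C) = 0 ↔ m ∈ RingHom.ker (algebraMap B C) • (⊤ : Submodule B M) := by
  let e : (B ⧸ RingHom.ker (Algebra.ofId B C)) ≃ₐ[B] C :=
    Ideal.quotientKerAlgEquivOfSurjective hC
  let E := TensorProduct.comm B M C ≪≫ₗ e.symm.toLinearEquiv.rTensor M
  have hE : E (m ⊗ₜ 1) = 1 ⊗ₜ m := by simp [E]
  rw [← E.map_eq_zero_iff, hE]
  exact SetLike.ext_iff.mp (LinearMap.ker_tensorProductMk M) m

variable {R S : Type*} [CommRing R] [CommRing S] [Algebra R S] {𝔞 : Ideal S}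

section Ideals

variable (R) in
/-- The difference `a ⊗ 1 - 1 ⊗ a` of the two pullbacks of `a` to the self-product, as an element of
the ideal of the diagonal. The sign is opposite to that of `KaehlerDifferential.DLinearMap`. -/
noncomputable def pullbackDifference : S →ₗ[R] KaehlerDifferential.ideal R S :=
  ((includeLeft : S →ₐ[R] S ⊗[R] S).toLinearMap -
      (includeRight : S →ₐ[R] S ⊗[R] S).toLinearMap).codRestrict
    ((KaehlerDifferential.ideal R S).restrictScalars R) fun a => by simp [RingHom.mem_ker]

@[simp]
theorem coe_pullbackDifference (a : S) :
    (pullbackDifference R a : S ⊗[R] S) = a ⊗ₜ 1 - 1 ⊗ₜ a := rfl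

variable (R 𝔞) in
/-- The ideal of `W × W` in `X × X`, where `W ⊆ X` is the closed subscheme cut out by `𝔞`. -/
def selfProductIdeal : Ideal (S ⊗[R] S) :=
  𝔞.map (includeLeft : S →ₐ[R] S ⊗[R] S) ⊔ 𝔞.map (includeRight : S →ₐ[R] S ⊗[R] S)

theorem tmul_one_mem_selfProductIdeal {j : S} (hj : j ∈ 𝔞) :
    j ⊗ₜ[R] (1 : S) ∈ selfProductIdeal R 𝔞 :=
  Ideal.mem_sup_left (Ideal.mem_map_of_mem includeLeft hj)

theorem one_tmul_mem_selfProductIdeal {j : S} (hj : j ∈ 𝔞) :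
    (1 : S) ⊗ₜ[R] j ∈ selfProductIdeal R 𝔞 :=
  Ideal.mem_sup_right (Ideal.mem_map_of_mem includeRight hj)

theorem pullbackDifference_mem_selfProductIdeal {j : S} (hj : j ∈ 𝔞) :
    (pullbackDifference R j : S ⊗[R] S) ∈ selfProductIdeal R 𝔞 :=
  sub_mem (tmul_one_mem_selfProductIdeal hj) (one_tmul_mem_selfProductIdeal hj)

theorem sub_lmul'_tmul_one_mem_ideal (x : S ⊗[R] S) :
    x - lmul' R x ⊗ₜ 1 ∈ KaehlerDifferential.ideal R S := by
  simp [RingHom.mem_ker]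

theorem sub_one_tmul_lmul'_mem_ideal (x : S ⊗[R] S) :
    x - 1 ⊗ₜ lmul' R x ∈ KaehlerDifferential.ideal R S := by
  simp [RingHom.mem_ker]

theorem pullbackDifference_lmul'_mul_sub_mem {j : S} (hj : j ∈ 𝔞) (x : S ⊗[R] S) :
    (pullbackDifference R (lmul' R x * j) : S ⊗[R] S) - x * (pullbackDifference R j : S ⊗[R] S) ∈
      selfProductIdeal R 𝔞 * KaehlerDifferential.ideal R S := by
  have key : (pullbackDifference R (lmul' R x * j) : S ⊗[R] S) -
        x * (pullbackDifference R j : S ⊗[R] S) =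
      (1 ⊗ₜ j) * (x - 1 ⊗ₜ lmul' R x) - (j ⊗ₜ 1) * (x - lmul' R x ⊗ₜ 1) := by
    simp only [coe_pullbackDifference, mul_sub, Algebra.TensorProduct.tmul_mul_tmul, mul_one,
      mul_comm j]
    ring
  rw [key]
  exact sub_mem
    (Ideal.mul_mem_mul (one_tmul_mem_selfProductIdeal hj) (sub_one_tmul_lmul'_mem_ideal x))
    (Ideal.mul_mem_mul (tmul_one_mem_selfProductIdeal hj) (sub_lmul'_tmul_one_mem_ideal x))

theorem exists_sub_pullbackDifference_mem {x : S ⊗[R] S} (hxK : x ∈ selfProductIdeal R 𝔞)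
    (hxI : x ∈ KaehlerDifferential.ideal R S) :
    ∃ j ∈ 𝔞, x - pullbackDifference R j ∈
      selfProductIdeal R 𝔞 * KaehlerDifferential.ideal R S := by
  obtain ⟨y, hy, z, hz, rfl⟩ := Submodule.mem_sup.mp hxK
  have hy' : y - lmul' R y ⊗ₜ 1 ∈ selfProductIdeal R 𝔞 * KaehlerDifferential.ideal R S :=
    Ideal.mul_mono_left le_sup_left <| sub_map_mem_map_mul_ker_of_leftInverse
      (μ := lmul' R) (ι := includeLeft) (fun a => by simp) hy
  have hz' : z - 1 ⊗ₜ lmul' R z ∈ selfProductIdeal R 𝔞 * KaehlerDifferential.ideal R S :=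
    Ideal.mul_mono_left le_sup_right <| sub_map_mem_map_mul_ker_of_leftInverse
      (μ := lmul' R) (ι := includeRight) (fun a => by simp) hz
  have hyz : lmul' R z = -lmul' R y := by
    rwa [RingHom.mem_ker, map_add, add_comm, ← eq_neg_iff_add_eq_zero] at hxI
  have hyJ : lmul' R y ∈ 𝔞 :=
    (Ideal.map_le_iff_le_comap (K := 𝔞.comap (lmul' R))).mpr (fun a ha => by simpa using ha) hy
  refine ⟨lmul' R y, hyJ, ?_⟩
  convert add_mem hy' hz' using 1
  rw [hyz, TensorProduct.tmul_neg, coe_pullbackDifference]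
  abel

end Ideals

section Contraction

variable {p : S →ₗ[R] 𝔞.Cotangent}

theorem liftBaseChange_one_tmul_mul (hp : ∀ j : 𝔞, p j = 𝔞.toCotangent j) (j : 𝔞)
    (y : S ⊗[R] S) :
    p.liftBaseChange S ((1 ⊗ₜ (j : S)) * y) = lmul' R y • 𝔞.toCotangent j := by
  induction y with
  | zero => simp
  | add y z hy hz => rw [mul_add, map_add, hy, hz, map_add, add_smul]
  | tmul a b =>
    have hpb : p (j * b) = b • 𝔞.toCotangent j := by
      rw [← map_smul, ← hp, Submodule.coe_smul, smul_eq_mul, mul_comm]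
    rw [Algebra.TensorProduct.tmul_mul_tmul, one_mul, LinearMap.liftBaseChange_tmul, hpb, smul_smul,
      lmul'_apply_tmul]

theorem liftBaseChange_mul_eq_zero (hp : ∀ j : 𝔞, p j = 𝔞.toCotangent j)
    {x y : S ⊗[R] S} (hx : x ∈ selfProductIdeal R 𝔞) (hy : y ∈ KaehlerDifferential.ideal R S) :
    p.liftBaseChange S (x * y) = 0 := by
  rw [selfProductIdeal, Ideal.map, Ideal.map, ← Ideal.span_union] at hx
  induction hx using Submodule.span_induction generalizing y with
  | mem x hx =>
    obtain ⟨j, hj, rfl⟩ | ⟨j, hj, rfl⟩ := hx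
    · have : includeLeft (R := R) (S := R) (B := S) j * y = j • y := by
        rw [Algebra.smul_def]; rfl
      rw [this, map_smul, Ideal.Cotangent.smul_eq_zero_of_mem hj]
    · exact (liftBaseChange_one_tmul_mul hp ⟨j, hj⟩ y).trans (by rw [hy, zero_smul])
  | zero => simp
  | add x z _ _ hx hz => rw [add_mul, map_add, hx hy, hz hy, add_zero]
  | smul b x _ ih =>
    rw [smul_mul_assoc, smul_eq_mul, mul_left_comm]
    exact ih (Ideal.mul_mem_left _ b hy)

theorem toCotangent_eq_zero_of_pullbackDifference_mem
    (hp : ∀ j : 𝔞, p j = 𝔞.toCotangent j) {j : 𝔞}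
    (hj : (pullbackDifference R (j : S) : S ⊗[R] S) ∈
      selfProductIdeal R 𝔞 * KaehlerDifferential.ideal R S) : 𝔞.toCotangent j = 0 := by
  have hzero : p.liftBaseChange S (pullbackDifference R (j : S)) = 0 :=
    Submodule.mul_induction_on hj (fun x hx y hy => liftBaseChange_mul_eq_zero hp hx hy)
      fun x y hx hy => by rw [map_add, hx, hy, add_zero]
  simpa [Ideal.Cotangent.smul_eq_zero_of_mem j.2, hp] using hzero

end Contraction

section ShortExactSequence

variable (R 𝔞) in
/-- The reduction map `S ⊗ S → S ⧸ 𝔞 ⊗ S ⧸ 𝔞` as an algebra structure. It is reducible so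
that it can be used as a local instance. -/
noncomputable abbrev selfProductQuotientAlgebra :
    Algebra (S ⊗[R] S) ((S ⧸ 𝔞) ⊗[R] (S ⧸ 𝔞)) :=
  (Algebra.TensorProduct.map (Ideal.Quotient.mkₐ R 𝔞)
    (Ideal.Quotient.mkₐ R 𝔞)).toRingHom.toAlgebra

attribute [local instance] selfProductQuotientAlgebra

theorem algebraMap_selfProductQuotient_tmul (a b : S) :
    algebraMap (S ⊗[R] S) ((S ⧸ 𝔞) ⊗[R] (S ⧸ 𝔞)) (a ⊗ₜ b) =
      Ideal.Quotient.mk 𝔞 a ⊗ₜ Ideal.Quotient.mk 𝔞 b := rfl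

variable (R 𝔞) in
theorem algebraMap_selfProductQuotient_surjective :
    Function.Surjective (algebraMap (S ⊗[R] S) ((S ⧸ 𝔞) ⊗[R] (S ⧸ 𝔞))) :=
  TensorProduct.map_surjective (Ideal.Quotient.mkₐ_surjective R 𝔞)
    (Ideal.Quotient.mkₐ_surjective R 𝔞)

variable (R 𝔞) in
theorem ker_algebraMap_selfProductQuotient :
    RingHom.ker (algebraMap (S ⊗[R] S) ((S ⧸ 𝔞) ⊗[R] (S ⧸ 𝔞))) = selfProductIdeal R 𝔞 := by
  have hker : RingHom.ker (Ideal.Quotient.mkₐ R 𝔞) = 𝔞 := Ideal.Quotient.mkₐ_ker R 𝔞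
  have hmap := Algebra.TensorProduct.map_ker _ _ (Ideal.Quotient.mkₐ_surjective R 𝔞)
    (Ideal.Quotient.mkₐ_surjective R 𝔞)
  rwa [hker] at hmap

variable (R 𝔞) in
theorem map_ideal_selfProductQuotient :
    (KaehlerDifferential.ideal R S).map (algebraMap (S ⊗[R] S) ((S ⧸ 𝔞) ⊗[R] (S ⧸ 𝔞))) =
      KaehlerDifferential.ideal R (S ⧸ 𝔞) := by
  rw [← KaehlerDifferential.span_range_eq_ideal, ← KaehlerDifferential.span_range_eq_ideal,
    Ideal.map_span, ← Set.range_comp, ← (Ideal.Quotient.mk_surjective (I := 𝔞)).range_comp]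
  congr 2

theorem ideal_tmul_one_eq_zero_iff {x : KaehlerDifferential.ideal R S} :
    x ⊗ₜ[S ⊗[R] S] (1 : (S ⧸ 𝔞) ⊗[R] (S ⧸ 𝔞)) = 0 ↔
      (x : S ⊗[R] S) ∈ selfProductIdeal R 𝔞 * KaehlerDifferential.ideal R S := by
  rw [tmul_one_eq_zero_iff_mem_ker_smul_top (algebraMap_selfProductQuotient_surjective R 𝔞),
    ker_algebraMap_selfProductQuotient, Submodule.mem_smul_top_iff, smul_eq_mul]

theorem pullbackDifference_lmul'_mul_tmul_one {j : S} (hj : j ∈ 𝔞) (x : S ⊗[R] S) :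
    pullbackDifference R (lmul' R x * j) ⊗ₜ[S ⊗[R] S] (1 : (S ⧸ 𝔞) ⊗[R] (S ⧸ 𝔞)) =
      x • pullbackDifference R j ⊗ₜ[S ⊗[R] S] 1 := by
  rw [← sub_eq_zero, TensorProduct.smul_tmul', ← TensorProduct.sub_tmul,
    ideal_tmul_one_eq_zero_iff]
  exact pullbackDifference_lmul'_mul_sub_mem hj x

variable (R 𝔞) in
/-- The map `𝔞 → I ⊗ (S ⧸ 𝔞 ⊗ S ⧸ 𝔞)`, `j ↦ (j ⊗ 1 - 1 ⊗ j) ⊗ 1`, where `I` is the ideal of the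
diagonal; it descends to `conormalToDiagonal`. -/
noncomputable def idealToDiagonal : 𝔞 →ₗ[S]
    KaehlerDifferential.ideal R S ⊗[S ⊗[R] S] ((S ⧸ 𝔞) ⊗[R] (S ⧸ 𝔞)) where
  toFun j := pullbackDifference R (j : S) ⊗ₜ 1
  map_add' i j := by rw [Submodule.coe_add, map_add, TensorProduct.add_tmul]
  map_smul' s j := by
    have h := pullbackDifference_lmul'_mul_tmul_one j.2 (s ⊗ₜ[R] 1)
    rw [lmul'_apply_tmul, mul_one] at h
    exact h.trans (algebraMap_smul (S ⊗[R] S) s _)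

theorem idealToDiagonal_mul (i j : 𝔞) : idealToDiagonal R 𝔞 (i * j) = 0 := by
  have h := pullbackDifference_lmul'_mul_tmul_one j.2 ((i : S) ⊗ₜ[R] 1)
  rw [lmul'_apply_tmul, mul_one] at h
  refine h.trans ?_
  rw [← TensorProduct.tmul_smul, Algebra.smul_def, algebraMap_selfProductQuotient_tmul,
    Ideal.Quotient.eq_zero_iff_mem.mpr i.2, TensorProduct.zero_tmul, zero_mul,
    TensorProduct.tmul_zero]

variable (R 𝔞) in
/-- The conormal map `𝔞/𝔞² → I ⊗ (S ⧸ 𝔞 ⊗ S ⧸ 𝔞)`, `[j] ↦ (j ⊗ 1 - 1 ⊗ j) ⊗ 1`, bundled as a linear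
map over the left factor; linearity over `S ⊗ S` is `conormalToDiagonal_lmul'_smul`. -/
noncomputable def conormalToDiagonal : 𝔞.Cotangent →ₗ[S]
    KaehlerDifferential.ideal R S ⊗[S ⊗[R] S] ((S ⧸ 𝔞) ⊗[R] (S ⧸ 𝔞)) :=
  Ideal.Cotangent.lift (R := S)
    (M := KaehlerDifferential.ideal R S ⊗[S ⊗[R] S] ((S ⧸ 𝔞) ⊗[R] (S ⧸ 𝔞)))
    (idealToDiagonal R 𝔞) idealToDiagonal_mul

theorem conormalToDiagonal_toCotangent (j : 𝔞) :
    conormalToDiagonal R 𝔞 (𝔞.toCotangent j) = pullbackDifference R (j : S) ⊗ₜ 1 := rfl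

theorem conormalToDiagonal_lmul'_smul (x : S ⊗[R] S) (c : 𝔞.Cotangent) :
    conormalToDiagonal R 𝔞 (lmul' R x • c) = x • conormalToDiagonal R 𝔞 c := by
  obtain ⟨j, rfl⟩ := 𝔞.toCotangent_surjective c
  exact pullbackDifference_lmul'_mul_tmul_one j.2 x

theorem conormalToDiagonal_injective {p : S →ₗ[R] 𝔞.Cotangent}
    (hp : ∀ j : 𝔞, p j = 𝔞.toCotangent j) : Function.Injective (conormalToDiagonal R 𝔞) := by
  rw [injective_iff_map_eq_zero]
  intro c hc
  obtain ⟨j, rfl⟩ := 𝔞.toCotangent_surjective c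
  exact toCotangent_eq_zero_of_pullbackDifference_mem hp (ideal_tmul_one_eq_zero_iff.mp hc)

variable (R 𝔞) in
/-- The map `I ⊗ (S ⧸ 𝔞 ⊗ S ⧸ 𝔞) → S ⧸ 𝔞 ⊗ S ⧸ 𝔞` induced by the reduction map
`S ⊗ S → S ⧸ 𝔞 ⊗ S ⧸ 𝔞`. -/
noncomputable def diagonalReduction :
    KaehlerDifferential.ideal R S ⊗[S ⊗[R] S] ((S ⧸ 𝔞) ⊗[R] (S ⧸ 𝔞)) →ₗ[S ⊗[R] S]
      (S ⧸ 𝔞) ⊗[R] (S ⧸ 𝔞) :=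
  TensorProduct.lift ((LinearMap.lsmul (S ⊗[R] S) ((S ⧸ 𝔞) ⊗[R] (S ⧸ 𝔞))).comp
    (KaehlerDifferential.ideal R S).subtype)

theorem diagonalReduction_tmul_one (x : KaehlerDifferential.ideal R S) :
    diagonalReduction R 𝔞 (x ⊗ₜ 1) =
      algebraMap (S ⊗[R] S) ((S ⧸ 𝔞) ⊗[R] (S ⧸ 𝔞)) x := by
  rw [Algebra.algebraMap_eq_smul_one]
  rfl

theorem range_diagonalReduction :
    Set.range (diagonalReduction R 𝔞) = KaehlerDifferential.ideal R (S ⧸ 𝔞) := by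
  have hsurj := algebraMap_selfProductQuotient_surjective R 𝔞
  ext z
  rw [← map_ideal_selfProductQuotient, SetLike.mem_coe, Ideal.mem_map_iff_of_surjective _ hsurj]
  constructor
  · rintro ⟨s, rfl⟩
    obtain ⟨x, rfl⟩ := exists_tmul_one_eq hsurj s
    exact ⟨x, x.2, (diagonalReduction_tmul_one x).symm⟩
  · rintro ⟨x, hx, rfl⟩
    exact ⟨⟨x, hx⟩ ⊗ₜ 1, diagonalReduction_tmul_one ⟨x, hx⟩⟩

theorem exact_conormalToDiagonal_diagonalReduction :
    Function.Exact (conormalToDiagonal R 𝔞) (diagonalReduction R 𝔞) := by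
  refine fun s => ⟨fun hs => ?_, ?_⟩
  · obtain ⟨x, rfl⟩ := exists_tmul_one_eq (algebraMap_selfProductQuotient_surjective R 𝔞) s
    rw [diagonalReduction_tmul_one, ← RingHom.mem_ker,
      ker_algebraMap_selfProductQuotient] at hs
    obtain ⟨j, hj, hxj⟩ := exists_sub_pullbackDifference_mem hs x.2
    refine ⟨𝔞.toCotangent ⟨j, hj⟩, Eq.symm ?_⟩
    rw [conormalToDiagonal_toCotangent, ← sub_eq_zero, ← TensorProduct.sub_tmul,
      ideal_tmul_one_eq_zero_iff]
    exact hxj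
  · rintro ⟨c, rfl⟩
    obtain ⟨j, rfl⟩ := 𝔞.toCotangent_surjective c
    rw [conormalToDiagonal_toCotangent, diagonalReduction_tmul_one, ← RingHom.mem_ker,
      ker_algebraMap_selfProductQuotient]
    exact pullbackDifference_mem_selfProductIdeal j.2

theorem conormal_diagonal_ses_of_smooth_general {p : S →ₗ[R] 𝔞.Cotangent}
    (hp : ∀ j : 𝔞, p j = 𝔞.toCotangent j) :
    (∀ (x : S ⊗[R] S) (c : 𝔞.Cotangent),
        conormalToDiagonal R 𝔞 (lmul' R x • c) = x • conormalToDiagonal R 𝔞 c) ∧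
      Function.Injective (conormalToDiagonal R 𝔞) ∧
      Function.Exact (conormalToDiagonal R 𝔞) (diagonalReduction R 𝔞) ∧
      Set.range (diagonalReduction R 𝔞) = KaehlerDifferential.ideal R (S ⧸ 𝔞) :=
  ⟨conormalToDiagonal_lmul'_smul, conormalToDiagonal_injective hp,
    exact_conormalToDiagonal_diagonalReduction, range_diagonalReduction⟩

end ShortExactSequence

theorem exists_linearMap_extending_toCotangent {k A : Type*} [Field k] [CommRing A] [Algebra k A]
    (J : Ideal A) : ∃ p : A →ₗ[k] J.Cotangent, ∀ j : J, p j = J.toCotangent j := by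
  obtain ⟨p, hp⟩ := LinearMap.exists_extend (p := J.restrictScalars k)
    (J.toCotangent.restrictScalars k)
  exact ⟨p, LinearMap.congr_fun hp⟩

/-- Let `k` be a field, `A` a smooth (formally smooth and of finite type)
commutative `k`-algebra, `J ⊆ A` an ideal and `Ā = A/J`.  Let `I = ker (μ_A : A ⊗ A → A)` and
`Ī = ker (μ_Ā : Ā ⊗ Ā → Ā)`.  Then there is a short exact sequence of `(Ā ⊗_k Ā)`-modules
`0 → J/J² → I ⊗_{A ⊗ A} (Ā ⊗ Ā) → Ī → 0`,
where the first map sends the class of `j ∈ J` to the class of `j ⊗ 1 − 1 ⊗ j`, and the second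
map is induced by the projection `A ⊗_k A → Ā ⊗_k Ā`. -/
theorem conormal_diagonal_ses_of_smooth :
    letI : Algebra (A ⊗[k] A) ((A ⧸ J) ⊗[k] (A ⧸ J)) :=
      (Algebra.TensorProduct.map (Ideal.Quotient.mkₐ k J)
        (Ideal.Quotient.mkₐ k J)).toRingHom.toAlgebra
    letI : Module k (↥(RingHom.ker (Algebra.TensorProduct.lmul' k (S := A)))
        ⊗[A ⊗[k] A] ((A ⧸ J) ⊗[k] (A ⧸ J))) :=
      Module.compHom _ (algebraMap k (A ⊗[k] A))
    ∀ (I : Ideal (A ⊗[k] A)), I = RingHom.ker (Algebra.TensorProduct.lmul' k (S := A)) →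
    ∀ (Ibar : Ideal ((A ⧸ J) ⊗[k] (A ⧸ J))),
      Ibar = RingHom.ker (Algebra.TensorProduct.lmul' k (S := A ⧸ J)) →
    ∀ β : (↥(RingHom.ker (Algebra.TensorProduct.lmul' k (S := A)))
        ⊗[A ⊗[k] A] ((A ⧸ J) ⊗[k] (A ⧸ J))) →ₗ[A ⊗[k] A] ((A ⧸ J) ⊗[k] (A ⧸ J)),
      β = TensorProduct.lift ((LinearMap.lsmul (A ⊗[k] A) ((A ⧸ J) ⊗[k] (A ⧸ J))).comp
        (Submodule.subtype (RingHom.ker (Algebra.TensorProduct.lmul' k (S := A))))) →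
    ∃ f : J.Cotangent →ₗ[k]
        (↥(RingHom.ker (Algebra.TensorProduct.lmul' k (S := A)))
          ⊗[A ⊗[k] A] ((A ⧸ J) ⊗[k] (A ⧸ J))),
      (∀ (j : ↥J)
        (h : ((j : A) ⊗ₜ[k] (1 : A) - (1 : A) ⊗ₜ[k] (j : A)) ∈
          RingHom.ker (Algebra.TensorProduct.lmul' k (S := A))),
        f (J.toCotangent j) =
          (⟨(j : A) ⊗ₜ[k] (1 : A) - (1 : A) ⊗ₜ[k] (j : A), h⟩ :
            ↥(RingHom.ker (Algebra.TensorProduct.lmul' k (S := A))))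
            ⊗ₜ[A ⊗[k] A] (1 : (A ⧸ J) ⊗[k] (A ⧸ J))) ∧
      Function.Injective f ∧
      (∀ s, β s ∈ Ibar) ∧
      (∀ s, β s = 0 ↔ s ∈ LinearMap.range f) ∧
      (∀ z ∈ Ibar, ∃ s, β s = z) := by
  intro I hI Ibar hIbar β hβ
  subst hI hIbar hβ
  obtain ⟨p, hp⟩ := exists_linearMap_extending_toCotangent (k := k) J
  obtain ⟨hlin, hinj, hexact, hrange⟩ := conormal_diagonal_ses_of_smooth_general hp
  let := selfProductQuotientAlgebra k J
  let : Module k (RingHom.ker (lmul' k (S := A)) ⊗[A ⊗[k] A] ((A ⧸ J) ⊗[k] (A ⧸ J))) :=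
    Module.compHom _ (algebraMap k (A ⊗[k] A))
  let f : J.Cotangent →ₗ[k] RingHom.ker (lmul' k (S := A)) ⊗[A ⊗[k] A] ((A ⧸ J) ⊗[k] (A ⧸ J)) :=
    { toFun := conormalToDiagonal k J
      map_add' := map_add _
      map_smul' := fun r c => by
        change _ = algebraMap k (A ⊗[k] A) r • conormalToDiagonal k J c
        rw [← hlin, AlgHom.commutes, algebraMap_smul] }
  exact ⟨f, fun j _ => conormalToDiagonal_toCotangent j, hinj, fun s => hrange.le ⟨s, rfl⟩, hexact,
    fun z hz => hrange.ge hz⟩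
end

section
/- Let k be a field, let A be a commutative k-algebra, let J ⊆ A be an ideal, and set Ā = A/J. Regard Ā as an (Ā ⊗_k A)-algebra via the map ā ⊗ b ↦ ā · b̄, and regard Ā ⊗_k J as an (Ā ⊗_k A)-submodule of Ā ⊗_k A. Then there is a canonical isomorphism of Ā-modules (Ā ⊗_k J) ⊗_{(Ā ⊗_k A)} Ā ≅ J/J², sending (ā ⊗ j) ⊗ 1 to ā · (j mod J²). -/
set_option synthInstance.maxHeartbeats 1000000
set_option maxHeartbeats 1000000

open TensorProduct

section RightModule

variable (k : Type*) [CommRing k] (S : Type*) [CommRing S] [Algebra k S]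
variable (M : Type*) [AddCommGroup M] [Module k M]
variable (N : Type*) [AddCommGroup N] [Module k N] [Module S N] [IsScalarTower k S N]

/-- Scalar multiplication by `s : S` on `N`, as a `k`-linear map. -/
noncomputable def rightSMulMap (s : S) : N →ₗ[k] N where
  toFun n := s • n
  map_add' := smul_add s
  map_smul' c n := (smul_comm c s n).symm

/-- The `S`-module structure on `M ⊗[k] N` acting through the right tensor factor:
`s • (m ⊗ n) = m ⊗ (s • n)`. -/
noncomputable def rightModule : Module S (M ⊗[k] N) where
  smul s x := LinearMap.lTensor M (rightSMulMap k S N s) x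
  one_smul x := by
    have h : rightSMulMap k S N (1 : S) = LinearMap.id := by
      ext n; simp [rightSMulMap]
    show LinearMap.lTensor M (rightSMulMap k S N 1) x = x
    rw [h, LinearMap.lTensor_id]; rfl
  mul_smul s t x := by
    have h : rightSMulMap k S N (s * t) =
        (rightSMulMap k S N s) ∘ₗ (rightSMulMap k S N t) := by
      ext n; simp [rightSMulMap, mul_smul]
    show LinearMap.lTensor M (rightSMulMap k S N (s * t)) x = _
    rw [h, LinearMap.lTensor_comp]; rfl
  smul_zero s := map_zero _
  smul_add s x y := map_add _ x y
  add_smul s t x := by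
    have h : rightSMulMap k S N (s + t) = rightSMulMap k S N s + rightSMulMap k S N t := by
      ext n; simp [rightSMulMap, add_smul]
    show LinearMap.lTensor M (rightSMulMap k S N (s + t)) x = _
    rw [h, LinearMap.lTensor_add]; rfl
  zero_smul x := by
    have h : rightSMulMap k S N (0 : S) = 0 := by
      ext n; simp [rightSMulMap]
    show LinearMap.lTensor M (rightSMulMap k S N 0) x = 0
    rw [h, LinearMap.lTensor_zero]; rfl

end RightModule

variable (k : Type*) [Field k]
variable (A : Type*) [CommRing A] [Algebra k A]
variable (J : Ideal A)

/-!
Put `S = Ā ⊗ A`, viewed as an `A`-algebra through its right factor. It is a base change of the flat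
algebra `Ā`, hence flat over `A`, so the extended ideal `J S`, which is the image of `Ā ⊗ J`, is
isomorphic to `S ⊗[A] J`. Since `A → S → Ā` is the quotient map, cancelling `S` gives
`Ā ⊗[S] J S ≃ Ā ⊗[A] J ≃ J / J²`.
-/

section FlatExtension

variable {A S : Type*} [CommRing A] [CommRing S] [Algebra A S] (J : Ideal A)

theorem span_range_linearMap_comp_subtype_eq_map :
    Submodule.span S (LinearMap.range (Algebra.linearMap A S ∘ₗ J.subtype) : Set S) =
      J.map (algebraMap A S) := by
  rw [LinearMap.coe_range, LinearMap.coe_comp, Set.range_comp, Submodule.coe_subtype,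
    Subtype.range_coe]
  rfl

theorem liftBaseChange_linearMap_comp_subtype_injective [Module.Flat A S] :
    Function.Injective ((Algebra.linearMap A S ∘ₗ J.subtype).liftBaseChange S) := by
  have hfactor : ((Algebra.linearMap A S ∘ₗ J.subtype).liftBaseChange S).restrictScalars A =
      (TensorProduct.rid A S).toLinearMap ∘ₗ J.subtype.lTensor S := by
    ext s j
    simp [Algebra.smul_def, mul_comm]
  rw [← LinearMap.coe_restrictScalars A, hfactor]
  exact (TensorProduct.rid A S).injective.comp
    (Module.Flat.lTensor_preserves_injective_linearMap J.subtype J.subtype_injective)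

/-- For a flat `A`-algebra `S`, the multiplication map `s ⊗ j ↦ s j` as an isomorphism from the
base change of `J` to the extended ideal `J S`. -/
noncomputable def tensorIdealEquivMap [Module.Flat A S] :
    S ⊗[A] J ≃ₗ[S] J.map (algebraMap A S) :=
  LinearEquiv.ofInjective _ (liftBaseChange_linearMap_comp_subtype_injective J) ≪≫ₗ
    LinearEquiv.ofEq _ _
      ((LinearMap.range_liftBaseChange S _).trans (span_range_linearMap_comp_subtype_eq_map J))

theorem coe_tensorIdealEquivMap_tmul [Module.Flat A S] (s : S) (j : J) :
    (tensorIdealEquivMap J (s ⊗ₜ[A] j) : S) = s * algebraMap A S j :=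
  rfl

/-- The base change of `J` to `A ⧸ J`, identified with the conormal module `J / J²`. -/
noncomputable def quotientTensorIdealEquivCotangent : (A ⧸ J) ⊗[A] J ≃ₗ[A ⧸ J] J.Cotangent :=
  letI e : (A ⧸ J) ⊗[A] J ≃ₗ[A] J.Cotangent := TensorProduct.quotTensorEquivQuotSMul J J
  e.extendScalarsOfSurjective Ideal.Quotient.mk_surjective

theorem quotientTensorIdealEquivCotangent_tmul (c : A ⧸ J) (j : J) :
    quotientTensorIdealEquivCotangent J (c ⊗ₜ[A] j) = c • J.toCotangent j := by
  obtain ⟨a, rfl⟩ := Ideal.Quotient.mk_surjective c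
  exact TensorProduct.quotTensorEquivQuotSMul_mk_tmul J a j

variable [Module.Flat A S] [Algebra S (A ⧸ J)] [IsScalarTower A S (A ⧸ J)]

/-- The base change of the ideal `J S` along `S → A ⧸ J`, identified with the conormal module
`J / J²`, for a flat `A`-algebra `S` over which `A ⧸ J` is an algebra. -/
noncomputable def quotientTensorMapEquivCotangent :
    (A ⧸ J) ⊗[S] J.map (algebraMap A S) ≃ₗ[A ⧸ J] J.Cotangent :=
  TensorProduct.AlgebraTensorModule.congr (LinearEquiv.refl (A ⧸ J) (A ⧸ J))
      (tensorIdealEquivMap J).symm ≪≫ₗ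
    TensorProduct.AlgebraTensorModule.cancelBaseChange A S (A ⧸ J) (A ⧸ J) J ≪≫ₗ
    quotientTensorIdealEquivCotangent J

theorem quotientTensorMapEquivCotangent_tmul (c : A ⧸ J) {s : S} {j : J}
    {x : J.map (algebraMap A S)} (hx : (x : S) = s * algebraMap A S j) :
    quotientTensorMapEquivCotangent J (c ⊗ₜ[S] x) = (s • c) • J.toCotangent j := by
  have hsymm : (tensorIdealEquivMap J).symm x = s ⊗ₜ[A] j := by
    rw [LinearEquiv.symm_apply_eq]
    exact Subtype.ext (hx.trans (coe_tensorIdealEquivMap_tmul J s j).symm)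
  rw [← quotientTensorIdealEquivCotangent_tmul]
  simp [quotientTensorMapEquivCotangent, hsymm]

end FlatExtension

/-- The symmetry of the tensor product, as an `S`-linear map from `M ⊗[R] N` with `S` acting
through the right factor by `rightModule` to `N ⊗[R] M` with its usual left action. -/
noncomputable def rightModuleComm (R S M N : Type*) [CommRing R] [CommRing S] [Algebra R S]
    [AddCommGroup M] [Module R M] [AddCommGroup N] [Module R N] [Module S N]
    [IsScalarTower R S N] :
    letI := rightModule R S M N
    M ⊗[R] N ≃ₗ[S] N ⊗[R] M :=
  letI := rightModule R S M N
  { TensorProduct.comm R M N with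
    map_smul' s x := by
      change TensorProduct.comm R M N ((rightSMulMap R S N s).lTensor M x) =
        s • TensorProduct.comm R M N x
      induction x with
      | zero => simp
      | add x y hx hy => simp only [map_add, smul_add, hx, hy]
      | tmul m n => simp [rightSMulMap, TensorProduct.smul_tmul'] }

theorem exists_mapTensorQuotient_equiv_cotangent {A S : Type*} [CommRing A] [CommRing S]
    (J : Ideal A) [Algebra S (A ⧸ J)] {f : A →+* S} (hf : f.Flat)
    (hfJ : ∀ a, algebraMap S (A ⧸ J) (f a) = Ideal.Quotient.mk J a) :
    letI : Module (A ⧸ J) (J.map f ⊗[S] (A ⧸ J)) := rightModule S (A ⧸ J) (J.map f) (A ⧸ J)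
    ∃ e : J.map f ⊗[S] (A ⧸ J) ≃ₗ[A ⧸ J] J.Cotangent,
      ∀ (x : J.map f) (s : S) (j : J), (x : S) = s * f j →
        e (x ⊗ₜ[S] 1) = algebraMap S (A ⧸ J) s • J.toCotangent j := by
  algebraize [f]
  have htower : IsScalarTower A S (A ⧸ J) := .of_algebraMap_eq fun a ↦ (hfJ a).symm
  let := rightModule S (A ⧸ J) (J.map f) (A ⧸ J)
  refine ⟨rightModuleComm S (A ⧸ J) (J.map f) (A ⧸ J) ≪≫ₗ quotientTensorMapEquivCotangent J,
    fun x s j hx ↦ ?_⟩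
  rw [Algebra.algebraMap_eq_smul_one]
  exact quotientTensorMapEquivCotangent_tmul J 1 hx

section RightFactor

variable {R A B : Type*} [CommRing R] [CommRing A] [Algebra R A] [CommRing B] [Algebra R B]

theorem flat_includeRight [Module.Flat R B] :
    (Algebra.TensorProduct.includeRight : A →ₐ[R] B ⊗[R] A).toRingHom.Flat := by
  have hcomm : (Algebra.TensorProduct.includeRight : A →ₐ[R] B ⊗[R] A).toRingHom =
      (Algebra.TensorProduct.comm R A B : A ⊗[R] B →+* B ⊗[R] A).comp
        (algebraMap A (A ⊗[R] B)) := rfl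
  rw [hcomm]
  exact (RingHom.flat_algebraMap_iff.mpr inferInstance).comp
    (RingHom.Flat.of_bijective (Algebra.TensorProduct.comm R A B).bijective)

theorem span_tmul_eq_map_includeRight (J : Ideal A) :
    Ideal.span {x : B ⊗[R] A | ∃ b : B, ∃ j ∈ J, x = b ⊗ₜ[R] j} =
      J.map (Algebra.TensorProduct.includeRight : A →ₐ[R] B ⊗[R] A).toRingHom := by
  apply le_antisymm
  · rw [Ideal.span_le]
    rintro _ ⟨b, j, hj, rfl⟩
    have hmul : b ⊗ₜ[R] j = (b ⊗ₜ[R] (1 : A)) * ((1 : B) ⊗ₜ[R] j) := by simp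
    rw [hmul]
    exact Ideal.mul_mem_left _ _ (Ideal.mem_map_of_mem _ hj)
  · rw [Ideal.map_le_iff_le_comap]
    exact fun j hj ↦ Ideal.subset_span ⟨1, j, hj, rfl⟩

end RightFactor

theorem conormal_as_base_change_general (R A : Type*) [CommRing R] [CommRing A] [Algebra R A]
    (J : Ideal A) [Module.Flat R (A ⧸ J)] :
    letI : Algebra ((A ⧸ J) ⊗[R] A) (A ⧸ J) :=
      ((Algebra.TensorProduct.lmul' R (S := A ⧸ J)).comp
        (Algebra.TensorProduct.map (AlgHom.id R (A ⧸ J))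
          (Ideal.Quotient.mkₐ R J))).toRingHom.toAlgebra
    ∀ P : Ideal ((A ⧸ J) ⊗[R] A),
      P = Ideal.span
        {x : (A ⧸ J) ⊗[R] A | ∃ abar : A ⧸ J, ∃ j ∈ J, x = abar ⊗ₜ[R] j} →
    letI : Module (A ⧸ J) (↥P ⊗[(A ⧸ J) ⊗[R] A] (A ⧸ J)) :=
      rightModule ((A ⧸ J) ⊗[R] A) (A ⧸ J) ↥P (A ⧸ J)
    ∃ e : (↥P ⊗[(A ⧸ J) ⊗[R] A] (A ⧸ J)) ≃ₗ[A ⧸ J] J.Cotangent,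
      ∀ (abar : A ⧸ J) (j : ↥J) (h : abar ⊗ₜ[R] (j : A) ∈ P),
        e ((⟨abar ⊗ₜ[R] (j : A), h⟩ : ↥P) ⊗ₜ[(A ⧸ J) ⊗[R] A] (1 : A ⧸ J)) =
          abar • J.toCotangent j := by
  intro P hP
  rw [span_tmul_eq_map_includeRight] at hP
  subst hP
  let : Algebra ((A ⧸ J) ⊗[R] A) (A ⧸ J) :=
    ((Algebra.TensorProduct.lmul' R (S := A ⧸ J)).comp
      (Algebra.TensorProduct.map (AlgHom.id R (A ⧸ J))
        (Ideal.Quotient.mkₐ R J))).toRingHom.toAlgebra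
  have hmap (c : A ⧸ J) (a : A) :
      algebraMap ((A ⧸ J) ⊗[R] A) (A ⧸ J) (c ⊗ₜ[R] a) = c * Ideal.Quotient.mk J a := rfl
  obtain ⟨e, he⟩ := exists_mapTensorQuotient_equiv_cotangent J
    (flat_includeRight (R := R) (A := A) (B := A ⧸ J)) fun a ↦ (hmap 1 a).trans (one_mul _)
  refine ⟨e, fun abar j h ↦ ?_⟩
  rw [he ⟨_, h⟩ (abar ⊗ₜ[R] 1) j (by simp), hmap, map_one, mul_one]

/-- Let `k` be a field, `A` a commutative `k`-algebra, `J ⊆ A` an ideal and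
`Ā = A/J`.  Regard `Ā` as an `(Ā ⊗_k A)`-algebra via `ā ⊗ b ↦ ā·b̄`, and regard `Ā ⊗_k J` as
an `(Ā ⊗_k A)`-submodule of `Ā ⊗_k A`.  Then there is a canonical isomorphism of `Ā`-modules
`(Ā ⊗_k J) ⊗_{Ā ⊗_k A} Ā ≅ J/J²`, sending `(ā ⊗ j) ⊗ 1` to `ā · (j mod J²)`. -/
theorem conormal_as_base_change :
    letI : Algebra ((A ⧸ J) ⊗[k] A) (A ⧸ J) :=
      ((Algebra.TensorProduct.lmul' k (S := A ⧸ J)).comp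
        (Algebra.TensorProduct.map (AlgHom.id k (A ⧸ J))
          (Ideal.Quotient.mkₐ k J))).toRingHom.toAlgebra
    ∀ P : Ideal ((A ⧸ J) ⊗[k] A),
      P = Ideal.span
        {x : (A ⧸ J) ⊗[k] A | ∃ abar : A ⧸ J, ∃ j ∈ J, x = abar ⊗ₜ[k] j} →
    letI : Module (A ⧸ J) (↥P ⊗[(A ⧸ J) ⊗[k] A] (A ⧸ J)) :=
      rightModule ((A ⧸ J) ⊗[k] A) (A ⧸ J) ↥P (A ⧸ J)
    ∃ e : (↥P ⊗[(A ⧸ J) ⊗[k] A] (A ⧸ J)) ≃ₗ[A ⧸ J] J.Cotangent,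
      ∀ (abar : A ⧸ J) (j : ↥J) (h : abar ⊗ₜ[k] (j : A) ∈ P),
        e ((⟨abar ⊗ₜ[k] (j : A), h⟩ : ↥P) ⊗ₜ[(A ⧸ J) ⊗[k] A] (1 : A ⧸ J)) =
          abar • J.toCotangent j :=
  conormal_as_base_change_general k A J
end
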